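/- Let q be an odd prime power and let a, b, c be the three nontrivial elements of a Klein four-subgroup of PSL(2,q), and let d be any element of order 2 in PSL(2,q). Then θ(ad) + θ(bd) + θ(cd) = 4. -/

import Mathlib

open Matrix

/-- `θ(M) = (tr M)² / det M` for an invertible 2×2 matrix `M`. -/
noncomputable def theta {F : Type*} [Field F] (M : GL (Fin 2) F) : F :=
  (Matrix.trace (M : Matrix (Fin 2) (Fin 2) F)) ^ 2 / (M : Matrix (Fin 2) (Fin 2) F).det

/-- `PGL(2, F)`, the quotient of `GL(2, F)` by its centre (the nonzero scalar matrices). -/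
abbrev PGL2 (F : Type*) [Field F] := GL (Fin 2) F ⧸ Subgroup.center (GL (Fin 2) F)

/-- The conjugacy invariant `θ` on `PGL(2, F)` induced by `M ↦ (tr M)²/det M`
(well defined since `θ` is invariant under scalar multiplication). -/
noncomputable def thetaPGL {F : Type*} [Field F] (g : PGL2 F) : F :=
  theta (Quotient.out g)

/-- `PSL(2, F)` viewed as a subgroup of `PGL(2, F)`: the image of `SL(2, F)`. -/
def PSLsub (F : Type*) [Field F] : Subgroup (PGL2 F) :=
  ((QuotientGroup.mk' (Subgroup.center (GL (Fin 2) F))).comp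
    Matrix.SpecialLinearGroup.toGL).range

/-!
The Pythagorean Lemma is Parseval's identity. Involutions of `PGL(2, F)` lift to matrices of trace
zero, so lifts of the nontrivial elements of a Klein four-subgroup, together with the identity, are
pairwise orthogonal for the polar form `(X, Y) ↦ tr (X * adj Y)` of `det`. Expanding a lift `D`
of `d` along them and pairing the expansion with `D` itself gives `∑ x, θ(xd) = 4`, the sum being
over all four elements of the subgroup. If `d` is an involution, the term `x = 1` vanishes.
-/

lemma orderOf_mul_eq_two {G : Type*} [Group G] {a b : G} (ha : orderOf a = 2)
    (hb : orderOf b = 2) (hab : a ≠ b) (hcomm : Commute a b) : orderOf (a * b) = 2 := by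
  obtain ⟨ha2, -⟩ := orderOf_eq_prime_iff.mp ha
  obtain ⟨hb2, -⟩ := orderOf_eq_prime_iff.mp hb
  refine orderOf_eq_prime (by rw [hcomm.mul_pow, ha2, hb2, one_mul]) fun h ↦ hab ?_
  exact mul_right_cancel (h.trans ((sq b).symm.trans hb2).symm)

section FinTwo

variable {R : Type*} [CommRing R] {A B : Matrix (Fin 2) (Fin 2) R}

lemma add_adjugate_fin_two (M : Matrix (Fin 2) (Fin 2) R) : M + M.adjugate = M.trace • 1 := by
  ext i j
  fin_cases i <;> fin_cases j <;> simp [adjugate_fin_two, trace_fin_two, add_comm]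

lemma adjugate_eq_neg_of_trace_eq_zero (hA : A.trace = 0) : A.adjugate = -A := by
  have h := add_adjugate_fin_two A
  rw [hA, zero_smul] at h
  exact eq_neg_of_add_eq_zero_right h

lemma mul_self_fin_two (M : Matrix (Fin 2) (Fin 2) R) :
    M * M = M.trace • M - M.det • 1 := by
  have h := congrArg (M * ·) (add_adjugate_fin_two M)
  simp only [mul_add, mul_adjugate, mul_smul_comm, mul_one] at h
  exact eq_sub_of_add_eq h

lemma trace_mul_adjugate_fin_two (M N : Matrix (Fin 2) (Fin 2) R) :
    (M * N.adjugate).trace = M.trace * N.trace - (M * N).trace := by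
  rw [eq_sub_of_add_eq' (add_adjugate_fin_two N)]
  simp [mul_sub, mul_comm]

lemma mul_mul_self_fin_two (M N : Matrix (Fin 2) (Fin 2) R) :
    M * N * M = (M * N).trace • M - M.det • N.adjugate := by
  have h := congrArg (· * M) (add_adjugate_fin_two (M * N))
  simp only [add_mul, adjugate_mul_distrib, mul_assoc, adjugate_mul, mul_smul_comm, mul_one,
    smul_mul_assoc, one_mul] at h
  rw [mul_assoc]
  exact eq_sub_of_add_eq h

lemma mul_eq_neg_mul_of_trace_eq_zero (hA : A.trace = 0) (hB : B.trace = 0)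
    (hAB : (A * B).trace = 0) : A * B = -(B * A) := by
  have h := adjugate_mul_distrib A B
  rw [adjugate_eq_neg_of_trace_eq_zero hA, adjugate_eq_neg_of_trace_eq_zero hB,
    adjugate_eq_neg_of_trace_eq_zero hAB, neg_mul_neg] at h
  exact neg_eq_iff_eq_neg.mp h

-- The left side is `(det A * det B) • (tr D • 1 - 2 • D)`, which avoids dividing by `2`.
lemma orthogonal_expansion (hA : A.trace = 0) (hB : B.trace = 0) (hAB : (A * B).trace = 0)
    (D : Matrix (Fin 2) (Fin 2) R) :
    (A.det * B.det) • (D.adjugate - D) =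
      (B.det * (A * D).trace) • A + (A.det * (B * D).trace) • B
        + (A * B * D).trace • (A * B) := by
  -- Up to scalars, `X * D * X` is the conjugate of `D` by `X` when `tr X = 0`, and conjugating by
  -- `A` and then by `B` is conjugating by `A * B`: compare the two evaluations.
  have conj_A : B * A * B = B.det • A := by
    rw [mul_mul_self_fin_two, trace_mul_comm, hAB, adjugate_eq_neg_of_trace_eq_zero hA]
    simp
  have conj_adjugate_D : B * D.adjugate * B = -((B * D).trace • B + B.det • D) := by
    rw [mul_mul_self_fin_two, trace_mul_adjugate_fin_two, hB, adjugate_adjugate _ (by simp)]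
    simp only [zero_mul, zero_sub, Fintype.card_fin, tsub_self, pow_zero, one_smul]
    module
  have iterated_conj : B * (A * D * A) * B =
      (B.det * (A * D).trace) • A + (A.det * (B * D).trace) • B + (A.det * B.det) • D := by
    rw [mul_mul_self_fin_two A D, mul_sub, sub_mul, mul_smul_comm, smul_mul_assoc,
      mul_smul_comm, smul_mul_assoc, conj_A, conj_adjugate_D]
    module
  have direct_conj : B * (A * D * A) * B =
      -((A * B * D).trace • (A * B) - (A.det * B.det) • D.adjugate) := by
    rw [← det_mul, ← mul_mul_self_fin_two]
    nth_rw 1 [mul_eq_neg_mul_of_trace_eq_zero hA hB hAB]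
    noncomm_ring
  linear_combination (norm := module) direct_conj.symm.trans iterated_conj

lemma trace_parseval (hA : A.trace = 0) (hB : B.trace = 0) (hAB : (A * B).trace = 0)
    (D : Matrix (Fin 2) (Fin 2) R) :
    A.det * B.det * D.trace ^ 2 + B.det * (A * D).trace ^ 2 + A.det * (B * D).trace ^ 2
      + (A * B * D).trace ^ 2 = 4 * (A.det * B.det * D.det) := by
  have h := congrArg (fun M ↦ (M * D).trace) (orthogonal_expansion hA hB hAB D)
  simp only [smul_mul_assoc, sub_mul, add_mul, adjugate_mul, mul_self_fin_two D,
    trace_smul, trace_sub, trace_add, trace_one, Fintype.card_fin, smul_eq_mul,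
    Nat.cast_ofNat] at h
  linear_combination -h

end FinTwo

section ProjectiveGroup

variable {F : Type*} [Field F]

lemma theta_mul_of_mem_center (M : GL (Fin 2) F) {z : GL (Fin 2) F}
    (hz : z ∈ Subgroup.center (GL (Fin 2) F)) : theta (M * z) = theta M := by
  obtain ⟨r, hr⟩ := GeneralLinearGroup.mem_center_iff_val_mem_range_scalar.mp hz
  have hr0 : r ≠ 0 := by
    rintro rfl
    exact z.ne_zero (by rw [← hr, map_zero])
  have hMz : (M * z).val = r • M.val := by
    rw [Units.val_mul, ← hr, scalar_apply, smul_eq_mul_diagonal]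
  have hr2 : r ^ 2 ≠ 0 := pow_ne_zero 2 hr0
  rw [theta, theta, hMz, trace_smul, det_smul, Fintype.card_fin, smul_eq_mul, mul_pow,
    mul_div_mul_left _ _ hr2]

lemma thetaPGL_mk (M : GL (Fin 2) F) : thetaPGL (M : PGL2 F) = theta M := by
  obtain ⟨z, hz⟩ := QuotientGroup.mk_out_eq_mul (Subgroup.center (GL (Fin 2) F)) M
  exact (congrArg theta hz).trans (theta_mul_of_mem_center M z.2)

lemma mem_center_of_sq_mem_center {M : GL (Fin 2) F} (htr : M.val.trace ≠ 0)
    (hM : M ^ 2 ∈ Subgroup.center (GL (Fin 2) F)) : M ∈ Subgroup.center (GL (Fin 2) F) := by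
  rw [GeneralLinearGroup.mem_center_iff_val_mem_range_scalar] at hM ⊢
  obtain ⟨r, hr⟩ := hM
  have hsmul : M.val.trace • M.val = (r + M.val.det) • 1 := by
    rw [Units.val_pow_eq_pow_val, sq, mul_self_fin_two, scalar_apply, ← smul_one_eq_diagonal] at hr
    rw [add_smul, hr, sub_add_cancel]
  refine ⟨M.val.trace⁻¹ * (r + M.val.det), ?_⟩
  rw [scalar_apply, ← smul_one_eq_diagonal, mul_smul, ← hsmul, inv_smul_smul₀ htr]

lemma trace_eq_zero_of_orderOf_mk_eq_two {M : GL (Fin 2) F} (hM : orderOf (M : PGL2 F) = 2) :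
    M.val.trace = 0 := by
  obtain ⟨hsq, hne⟩ := orderOf_eq_prime_iff.mp hM
  rw [← QuotientGroup.mk_pow, QuotientGroup.eq_one_iff] at hsq
  rw [Ne, QuotientGroup.eq_one_iff] at hne
  by_contra htr
  exact hne (mem_center_of_sq_mem_center htr hsq)

lemma thetaPGL_eq_zero_of_orderOf_eq_two {d : PGL2 F} (hd : orderOf d = 2) : thetaPGL d = 0 := by
  induction d using QuotientGroup.induction_on with
  | H D => simp [thetaPGL_mk, theta, trace_eq_zero_of_orderOf_mk_eq_two hd]

theorem pythagorean_lemma_general {a b : PGL2 F} (ha : orderOf a = 2) (hb : orderOf b = 2)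
    (hab : a ≠ b) (hcomm : Commute a b) (d : PGL2 F) :
    thetaPGL d + thetaPGL (a * d) + thetaPGL (b * d) + thetaPGL (a * b * d) = 4 := by
  induction a using QuotientGroup.induction_on with | H A
  induction b using QuotientGroup.induction_on with | H B
  induction d using QuotientGroup.induction_on with | H D
  have hA := trace_eq_zero_of_orderOf_mk_eq_two ha
  have hB := trace_eq_zero_of_orderOf_mk_eq_two hb
  have hAB : (A.val * B.val).trace = 0 :=
    trace_eq_zero_of_orderOf_mk_eq_two (M := A * B) (orderOf_mul_eq_two ha hb hab hcomm)
  have hdet (M : GL (Fin 2) F) : M.val.det ≠ 0 := M.det_ne_zero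
  simp only [← QuotientGroup.mk_mul, thetaPGL_mk, theta, Units.val_mul, det_mul]
  field_simp [hdet A, hdet B, hdet D]
  linear_combination trace_parseval hA hB hAB D.val

end ProjectiveGroup

/-- The Pythagorean Lemma. -/
theorem pythagorean_lemma (F : Type*) [Field F] [Fintype F]
    (hodd : Odd (Fintype.card F))
    (a b c d : PGL2 F)
    (ha : a ∈ PSLsub F) (hb : b ∈ PSLsub F) (hc : c ∈ PSLsub F)
    (ha1 : a ≠ 1) (hb1 : b ≠ 1) (hab : a ≠ b)
    (ha2 : a ^ 2 = 1) (hb2 : b ^ 2 = 1) (hcomm : a * b = b * a) (hcab : c = a * b)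
    (hd : d ∈ PSLsub F) (hd2 : orderOf d = 2) :
    thetaPGL (a * d) + thetaPGL (b * d) + thetaPGL (c * d) = 4 := by
  simpa only [thetaPGL_eq_zero_of_orderOf_eq_two hd2, zero_add, ← hcab] using
    pythagorean_lemma_general (orderOf_eq_prime ha2 ha1) (orderOf_eq_prime hb2 hb1) hab hcomm d
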